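/- For integers n ≥ k ≥ d ≥ 1, the quotient ring ℤ[x_1,…,x_n,y_1,…,y_d]^{S_d}/(ℤ[x_1,…,x_n,y_1,…,y_d]^{S_d}·G) is spanned over ℤ by the images of the elements of C_{n,k,d}, where ℤ[x_1,…,x_n,y_1,…,y_d]^{S_d}·G denotes the ideal of the invariant ring generated by G. -/

import Mathlib

open MvPolynomial

set_option synthInstance.maxHeartbeats 1000000
set_option maxHeartbeats 4000000

/-- The elementary symmetric polynomial `e_r` in the x-variables, over `ℤ`. -/
noncomputable def eXZ (n d r : ℕ) : MvPolynomial (Fin n ⊕ Fin d) ℤ :=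
  rename Sum.inl (esymm (Fin n) ℤ r)

/-- The complete homogeneous symmetric polynomial `h_r` in the y-variables, over `ℤ`. -/
noncomputable def hYZ (n d r : ℕ) : MvPolynomial (Fin n ⊕ Fin d) ℤ :=
  rename Sum.inr (hsymm (Fin d) ℤ r)

/-- The elementary symmetric polynomial `e_r` in the y-variables, over `ℤ`. -/
noncomputable def eYZ (n d r : ℕ) : MvPolynomial (Fin n ⊕ Fin d) ℤ :=
  rename Sum.inr (esymm (Fin d) ℤ r)

/-- `Σ_{a+b=r} (−1)^b e_a(x_1,…,x_n)·h_b(y_1,…,y_d)`, over `ℤ`. -/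
noncomputable def genXYZ (n d r : ℕ) : MvPolynomial (Fin n ⊕ Fin d) ℤ :=
  ∑ j ∈ Finset.range (r + 1),
    (-1 : MvPolynomial (Fin n ⊕ Fin d) ℤ) ^ j * (eXZ n d (r - j) * hYZ n d j)

/-- `Σ_{j=0}^{d} (−1)^j x_i^{d−j} e_j(y_1,…,y_d)`, over `ℤ`. -/
noncomputable def genPowZ (n d : ℕ) (i : Fin n) : MvPolynomial (Fin n ⊕ Fin d) ℤ :=
  ∑ j ∈ Finset.range (d + 1),
    (-1 : MvPolynomial (Fin n ⊕ Fin d) ℤ) ^ j * (X (Sum.inl i) ^ (d - j) * eYZ n d j)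

/-- The set `G ⊆ ℤ[x_1,…,x_n,y_1,…,y_d]` of generators of the ideal `J_{n,k,d}`. -/
def GgensZ (n k d : ℕ) : Set (MvPolynomial (Fin n ⊕ Fin d) ℤ) :=
  {p | ∃ r, k - d < r ∧ p = hYZ n d r} ∪
  {p | ∃ r, n - d < r ∧ p = genXYZ n d r} ∪
  {p | ∃ i : Fin n, p = genPowZ n d i}

/-- The permutation of the variable index set `Fin n ⊕ Fin d` induced by a permutation
of the y-indices. -/
def permY (n d : ℕ) (g : Equiv.Perm (Fin d)) : (Fin n ⊕ Fin d) ≃ (Fin n ⊕ Fin d) :=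
  Equiv.sumCongr (Equiv.refl (Fin n)) g

/-- The subring of `S_d`-invariants of `ℤ[x_1,…,x_n,y_1,…,y_d]`, where `S_d` permutes
the variables `y_1,…,y_d` and fixes the x-variables. -/
noncomputable def invZ2 (n d : ℕ) : Subalgebra ℤ (MvPolynomial (Fin n ⊕ Fin d) ℤ) where
  carrier := {f | ∀ g : Equiv.Perm (Fin d), rename (⇑(permY n d g)) f = f}
  mul_mem' := fun ha hb g => by rw [map_mul, ha g, hb g]
  add_mem' := fun ha hb g => by rw [map_add, ha g, hb g]
  one_mem' := fun g => by rw [map_one]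
  zero_mem' := fun g => by rw [map_zero]
  algebraMap_mem' := fun r g => by rw [MvPolynomial.algebraMap_eq, rename_C]

/-- An `(n,d)`-staircase: a shuffle of the sequence `(0,1,…,d−1)` with `n−d` copies
of `d−1`, i.e. the values `0, 1, …, d−1` appear in this order at some increasing set of
`d` positions and every other entry equals `d−1`. -/
def IsStaircase (n d : ℕ) (s : Fin n → ℕ) : Prop :=
  ∃ φ : Fin d → Fin n, StrictMono φ ∧ (∀ t, s (φ t) = t) ∧
    ∀ j : Fin n, (∀ t, j ≠ φ t) → s j = d - 1

/-- An `(n,d)`-substaircase sequence: componentwise at most some `(n,d)`-staircase. -/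
def IsSubstaircase (n d : ℕ) (a : Fin n → ℕ) : Prop :=
  ∃ s, IsStaircase n d s ∧ ∀ j, a j ≤ s j

/-- Complete homogeneous symmetric polynomial indexed by an integer
(interpreted as zero for a negative index). -/
noncomputable def hsymmZidx (σ : Type*) [Fintype σ] [DecidableEq σ] (R : Type*)
    [CommSemiring R] (m : ℤ) : MvPolynomial σ R :=
  if 0 ≤ m then hsymm σ R m.toNat else 0

/-- The Schur polynomial `s_λ` in the `d` variables `y_1,…,y_d` over `ℤ`, defined via the
Jacobi–Trudi determinant `det(h_{λ_i − i + j})_{1 ≤ i,j ≤ d}` (for `λ` a partition with at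
most `d` parts, recorded as a weakly decreasing function `Fin d → ℕ`). -/
noncomputable def schurPoly (d : ℕ) (lam : Fin d → ℕ) : MvPolynomial (Fin d) ℤ :=
  (Matrix.of fun i j : Fin d =>
    hsymmZidx (Fin d) ℤ ((lam i : ℤ) - ((i : ℕ) : ℤ) + ((j : ℕ) : ℤ))).det

/-- The set `C_{n,k,d} ⊆ ℤ[x,y]^{S_d}` of products of substaircase monomials in the
x-variables with Schur polynomials `s_λ(y_1,…,y_d)` for partitions `λ ⊆ (k−d)^d`. -/
def CsetZ (n k d : ℕ) : Set (MvPolynomial (Fin n ⊕ Fin d) ℤ) :=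
  {p | ∃ a : Fin n → ℕ, IsSubstaircase n d a ∧
    ∃ lam : Fin d → ℕ, Antitone lam ∧ (∀ i, lam i ≤ k - d) ∧
      p = (∏ j, X (Sum.inl j) ^ a j) * rename Sum.inr (schurPoly d lam)}


/-- elementary symmetric function of `x 0, …, x (n-1)`. -/
noncomputable def eR {R : Type*} [CommRing R] (x : ℕ → R) (n r : ℕ) : R :=
  ∑ s ∈ Finset.powersetCard r (Finset.range n), ∏ i ∈ s, x i

lemma eR_zero {R : Type*} [CommRing R] (x : ℕ → R) (n : ℕ) : eR x n 0 = 1 := by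
  simp [eR]

lemma eR_big {R : Type*} [CommRing R] (x : ℕ → R) (n r : ℕ) (h : n < r) : eR x n r = 0 := by
  unfold eR
  rw [Finset.powersetCard_eq_empty.2 (by simpa using h)]
  simp

lemma eR_succ {R : Type*} [CommRing R] (x : ℕ → R) (n r : ℕ) :
    eR x (n + 1) (r + 1) = eR x n (r + 1) + x n * eR x n r := by
  unfold eR
  rw [Finset.range_add_one, Finset.powersetCard_succ_insert Finset.notMem_range_self]
  rw [Finset.sum_union]
  · congr 1
    rw [Finset.sum_image]
    · rw [Finset.mul_sum]
      refine Finset.sum_congr rfl fun s hs => ?_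
      rw [Finset.prod_insert]
      intro h
      have := (Finset.mem_powersetCard.1 hs).1 h
      simp at this
    · intro s hs t ht hst
      have h1 : n ∉ s := fun h => by
        have := (Finset.mem_powersetCard.1 hs).1 h
        simp at this
      have h2 : n ∉ t := fun h => by
        have := (Finset.mem_powersetCard.1 ht).1 h
        simp at this
      rw [← Finset.erase_insert h1, ← Finset.erase_insert h2, hst]
  · rw [Finset.disjoint_left]
    intro s hs hs'
    obtain ⟨t, ht, rfl⟩ := Finset.mem_image.1 hs'
    have := (Finset.mem_powersetCard.1 hs).1 (Finset.mem_insert_self n t)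
    simp at this

/-- good exponent sequences -/
def GoodSeq (d : ℕ) : ℕ → ℕ → (ℕ → ℕ) → Prop
  | 0, j, _ => j = 0
  | n + 1, j, a => a n < d ∧ GoodSeq d n (if a n < j then j - 1 else j) a

lemma GoodSeq.congr {d : ℕ} : ∀ {n j : ℕ} {a b : ℕ → ℕ}, (∀ i < n, a i = b i) →
    GoodSeq d n j a → GoodSeq d n j b
  | 0, _, _, _, _, h => h
  | n + 1, j, a, b, hab, h => by
    unfold GoodSeq at h ⊢
    rw [← hab n (by omega)]
    exact ⟨h.1, h.2.congr fun i hi => hab i (by omega)⟩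

lemma GoodSeq.chain {d : ℕ} : ∀ {n j : ℕ} {a : ℕ → ℕ}, GoodSeq d n j a →
    (∀ i < n, a i < d) ∧ ∃ φ : ℕ → ℕ, (∀ t < j, φ t < n ∧ a (φ t) ≤ t) ∧
      ∀ t t', t < t' → t' < j → φ t < φ t'
  | 0, j, a, h => by
    unfold GoodSeq at h
    subst h
    exact ⟨by simp, id, by simp, by simp⟩
  | n + 1, j, a, h => by
    unfold GoodSeq at h
    obtain ⟨h1, h2⟩ := h
    obtain ⟨h3, φ, h4, h5⟩ := h2.chain
    refine ⟨fun i hi => ?_, ?_⟩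
    · rcases Nat.lt_succ_iff_lt_or_eq.1 hi with h | rfl
      · exact h3 i h
      · exact h1
    · split_ifs at h4 h5 with hj
      · refine ⟨Function.update φ (j - 1) n, fun t ht => ?_, fun t t' htt ht' => ?_⟩
        · by_cases hjt : t = j - 1
          · subst hjt; simp; omega
          · rw [Function.update_of_ne hjt]
            have := h4 t (by omega)
            exact ⟨by omega, this.2⟩
        · rw [Function.update_of_ne (show t ≠ j - 1 by omega)]
          by_cases hjt : t' = j - 1
          · subst hjt
            simp
            exact (h4 t (by omega)).1
          · rw [Function.update_of_ne hjt]
            exact h5 t t' htt (by omega)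
      · exact ⟨φ, fun t ht => ⟨by have := (h4 t ht).1; omega, (h4 t ht).2⟩, h5⟩

lemma GoodSeq.isSubstaircase {n d : ℕ} {a : ℕ → ℕ} (h : GoodSeq d n d a) :
    IsSubstaircase n d (fun i : Fin n => a i) := by
  classical
  obtain ⟨h1, φ, h2, h3⟩ := h.chain
  have inj : ∀ t < d, ∀ t' < d, φ t = φ t' → t = t' := by
    intro t ht t' ht' e
    rcases lt_trichotomy t t' with h | h | h
    · have := h3 t t' h ht'; omega
    · exact h
    · have := h3 t' t h ht; omega
  refine ⟨fun i => if h : ∃ t : Fin d, φ t = i then (h.choose : ℕ) else d - 1,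
    ⟨fun t => ⟨φ t, (h2 t t.2).1⟩, fun t t' htt => h3 t t' htt t'.2, fun t => ?_, fun j hj => ?_⟩,
    fun j => ?_⟩
  · have hex : ∃ t' : Fin d, φ t' = φ t := ⟨t, rfl⟩
    dsimp only
    rw [dif_pos hex]
    exact inj _ hex.choose.2 _ t.2 hex.choose_spec
  · dsimp only
    rw [dif_neg]
    rintro ⟨t, ht⟩
    exact hj t (Fin.ext ht.symm)
  · dsimp only
    split_ifs with hex
    · have := (h2 _ hex.choose.2).2
      rw [hex.choose_spec] at this
      exact this
    · have := h1 j j.2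
      omega

lemma adjoin_step {R : Type*} [CommRing R] (x : ℕ → R) (n : ℕ) (T : AddSubgroup R)
    (h : ∀ p : ℕ, ∀ g ∈ Algebra.adjoin ℤ (x '' Set.Iio n), g * x n ^ p ∈ T)
    (f : R) (hf : f ∈ Algebra.adjoin ℤ (x '' Set.Iio (n + 1))) : f ∈ T := by
  have key : ∀ f ∈ Algebra.adjoin ℤ (x '' Set.Iio (n + 1)),
      ∃ p : Polynomial (Algebra.adjoin ℤ (x '' Set.Iio n)), Polynomial.aeval (x n) p = f := by
    intro f hf
    induction hf using Algebra.adjoin_induction with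
    | mem y hy =>
      obtain ⟨i, hi, rfl⟩ := hy
      rcases Nat.lt_succ_iff_lt_or_eq.1 hi with h | rfl
      · exact ⟨Polynomial.C ⟨x i, Algebra.subset_adjoin ⟨i, h, rfl⟩⟩, by
          rw [Polynomial.aeval_C]; rfl⟩
      · exact ⟨Polynomial.X, by simp⟩
    | algebraMap r => exact ⟨Polynomial.C (algebraMap _ _ r), by
        rw [Polynomial.aeval_C]; rfl⟩
    | add a b _ _ ha hb =>
      obtain ⟨p, rfl⟩ := ha
      obtain ⟨q, rfl⟩ := hb
      exact ⟨p + q, map_add _ _ _⟩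
    | mul a b _ _ ha hb =>
      obtain ⟨p, rfl⟩ := ha
      obtain ⟨q, rfl⟩ := hb
      exact ⟨p * q, map_mul _ _ _⟩
  obtain ⟨p, rfl⟩ := key f hf
  rw [Polynomial.aeval_eq_sum_range]
  refine T.sum_mem fun i _ => ?_
  exact h i _ (p.coeff i).2

lemma eR_mem {R : Type*} [CommRing R] (x : ℕ → R) (n r : ℕ) :
    eR x n r ∈ Algebra.adjoin ℤ (x '' Set.Iio n) := by
  refine Subalgebra.sum_mem _ fun s hs => Subalgebra.prod_mem _ fun i hi => ?_
  exact Algebra.subset_adjoin ⟨i, by simpa using (Finset.mem_powersetCard.1 hs).1 hi, rfl⟩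

theorem good_span {R : Type*} [CommRing R] (x : ℕ → R) (d : ℕ) : ∀ (n j : ℕ) (T : AddSubgroup R),
    (∀ a, GoodSeq d n j a → ∏ i ∈ Finset.range n, x i ^ a i ∈ T) →
    (∀ f ∈ Algebra.adjoin ℤ (x '' Set.Iio n), ∀ i < n, f * x i ^ d ∈ T) →
    (∀ f ∈ Algebra.adjoin ℤ (x '' Set.Iio n), ∀ r, n < r + j → f * eR x n r ∈ T) →
    ∀ f ∈ Algebra.adjoin ℤ (x '' Set.Iio n), f ∈ T := by
  intro n
  induction n with
  | zero =>
    intro j T h1 h2 h3 f hf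
    rcases Nat.eq_zero_or_pos j with rfl | hj
    · have h0 := h1 0 rfl
      simp at h0
      have : (x '' Set.Iio 0) = ∅ := by simp
      rw [this, Algebra.adjoin_empty, Algebra.mem_bot] at hf
      obtain ⟨m, rfl⟩ := hf
      have := T.zsmul_mem h0 m
      simpa using this
    · have := h3 f hf 0 (by omega)
      simpa [eR_zero] using this
  | succ n ih =>
    intro j T h1 h2 h3 f hf
    have mono : Algebra.adjoin ℤ (x '' Set.Iio n) ≤ Algebra.adjoin ℤ (x '' Set.Iio (n + 1)) :=
      Algebra.adjoin_mono (Set.image_mono (Set.Iio_subset_Iio (by omega)))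
    have xn : x n ∈ Algebra.adjoin ℤ (x '' Set.Iio (n + 1)) :=
      Algebra.subset_adjoin ⟨n, by simp, rfl⟩
    -- vanishing for large powers
    have van : ∀ m r p, m + r = n + 1 → n + 1 ≤ p + r → n < r + j →
        ∀ f ∈ Algebra.adjoin ℤ (x '' Set.Iio n), f * eR x n r * x n ^ p ∈ T := by
      intro m
      induction m with
      | zero =>
        intro r p hr _ _ f _
        rw [eR_big x n r (by omega)]
        simp
      | succ m ihm =>
        intro r p hr hp hj f hf
        obtain ⟨p, rfl⟩ : ∃ q, p = q + 1 := ⟨p - 1, by omega⟩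
        have e1 := ihm (r + 1) p (by omega) (by omega) (by omega) f hf
        have e2 := h3 (f * x n ^ p) (mul_mem (mono hf) (pow_mem xn p)) (r + 1) (by omega)
        rw [eR_succ] at e2
        convert T.sub_mem e2 e1 using 1
        ring
    have van' : ∀ r p, n + 1 ≤ p + r → n < r + j →
        ∀ f ∈ Algebra.adjoin ℤ (x '' Set.Iio n), f * eR x n r * x n ^ p ∈ T := by
      intro r p h h' f hf
      by_cases hr : r ≤ n + 1
      · exact van (n + 1 - r) r p (by omega) h h' f hf
      · rw [eR_big x n r (by omega)]
        simp
    refine adjoin_step x n T ?_ f hf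
    have desc : ∀ m p, d ≤ m + p → ∀ g ∈ Algebra.adjoin ℤ (x '' Set.Iio n), g * x n ^ p ∈ T := by
      intro m
      induction m with
      | zero =>
        intro p hp g hg
        have := h2 (g * x n ^ (p - d)) (mul_mem (mono hg) (pow_mem xn _)) n (by omega)
        rw [mul_assoc, ← pow_add] at this
        rwa [show p - d + d = p by omega] at this
      | succ m ihm =>
        intro p hp g hg
        by_cases hpd : d ≤ p
        · have := h2 (g * x n ^ (p - d)) (mul_mem (mono hg) (pow_mem xn _)) n (by omega)
          rw [mul_assoc, ← pow_add] at this
          rwa [show p - d + d = p by omega] at this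
        refine ih (if p < j then j - 1 else j) (T.comap (AddMonoidHom.mulRight (x n ^ p)))
          ?_ ?_ ?_ g hg
        · intro a ha
          have hb : GoodSeq d (n + 1) j (Function.update a n p) := by
            unfold GoodSeq
            rw [Function.update_self]
            exact ⟨by omega, ha.congr fun i hi => by
              rw [Function.update_of_ne (by omega)]⟩
          have := h1 _ hb
          rw [Finset.prod_range_succ, Function.update_self] at this
          rw [AddSubgroup.mem_comap]
          convert this using 1
          simp only [AddMonoidHom.mulRight_apply]
          congr 1
          refine Finset.prod_congr rfl fun i hi => ?_
          rw [Function.update_of_ne (by have := Finset.mem_range.1 hi; omega)]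
        · intro f hf i hi
          rw [AddSubgroup.mem_comap]
          have := h2 (f * x n ^ p) (mul_mem (mono hf) (pow_mem xn p)) i (by omega)
          convert this using 1
          simp only [AddMonoidHom.mulRight_apply]
          ring
        · intro f hf r hr
          rw [AddSubgroup.mem_comap]
          simp only [AddMonoidHom.mulRight_apply]
          split_ifs at hr with hpj
          · cases r with
            | zero =>
              have := h3 (f * x n ^ p) (mul_mem (mono hf) (pow_mem xn p)) 0 (by omega)
              rw [eR_zero] at this ⊢
              convert this using 1
              ring
            | succ r =>
              have e1 := h3 (f * x n ^ p) (mul_mem (mono hf) (pow_mem xn p)) (r + 1) (by omega)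
              have e2 := ihm (p + 1) (by omega) (f * eR x n r) (mul_mem hf (eR_mem x n r))
              rw [eR_succ] at e1
              convert T.sub_mem e1 e2 using 1
              ring
          · exact van' r p (by omega) hr f hf
    intro p g hg
    exact desc d p (by omega) g hg

lemma prod_one_add_mul {S : Type*} [CommRing S] {d : ℕ} (y : Fin d → S) (T : S) :
    ∏ i, (1 + y i * T) = ∑ r ∈ Finset.range (d + 1),
      (∑ s ∈ Finset.powersetCard r Finset.univ, ∏ i ∈ s, y i) * T ^ r := by
  rw [Finset.prod_one_add, Finset.sum_powerset, Finset.card_univ, Fintype.card_fin]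
  refine Finset.sum_congr rfl fun r _ => ?_
  rw [Finset.sum_mul]
  refine Finset.sum_congr rfl fun s hs => ?_
  rw [Finset.prod_mul_distrib, Finset.prod_const, (Finset.mem_powersetCard.1 hs).2]

lemma hsymm_gen (d : ℕ) :
    (PowerSeries.mk fun r => hsymm (Fin d) ℤ r) =
      ∏ i : Fin d, PowerSeries.mk fun m => (X i : MvPolynomial (Fin d) ℤ) ^ m := by
  ext1 r
  rw [PowerSeries.coeff_mk, PowerSeries.coeff_prod]
  simp only [PowerSeries.coeff_mk]
  rw [hsymm]
  refine Finset.sum_bij' (fun s _ => Multiset.toFinsupp (s : Multiset (Fin d)))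
    (fun l hl => ⟨Finsupp.toMultiset l, ?_⟩) ?_ ?_ ?_ ?_ ?_
  · rw [Finset.mem_finsuppAntidiag] at hl
    rw [Finsupp.card_toMultiset, ← hl.1, Finsupp.sum_fintype] <;> simp
  · intro s _
    rw [Finset.mem_finsuppAntidiag]
    refine ⟨?_, by simp⟩
    change ∑ i, Multiset.count i (s : Multiset (Fin d)) = r
    rw [Multiset.sum_count_eq_card (by simp)]
    exact s.2
  · intro l hl; exact Finset.mem_univ _
  · intro s _
    apply Subtype.ext
    simp
  · intro l hl
    simp
  · intro s _
    rw [Finset.prod_multiset_map_count]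
    simp only [Multiset.toFinsupp_apply]
    refine Finset.prod_subset (by simp) fun i _ hi => ?_
    rw [Multiset.count_eq_zero_of_notMem (by simpa using hi)]
    simp

lemma EH_one (d : ℕ) :
    (PowerSeries.mk fun r => (-1) ^ r * esymm (Fin d) ℤ r) *
      (PowerSeries.mk fun r => hsymm (Fin d) ℤ r) = 1 := by
  have h1 : (PowerSeries.mk fun r => (-1) ^ r * esymm (Fin d) ℤ r) =
      ∏ i : Fin d, (1 + PowerSeries.C (-X i : MvPolynomial (Fin d) ℤ) * PowerSeries.X) := by
    rw [prod_one_add_mul]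
    ext1 r
    rw [PowerSeries.coeff_mk, map_sum]
    have : ∀ q, (∑ s ∈ Finset.powersetCard q Finset.univ,
        ∏ i ∈ s, PowerSeries.C (-X i : MvPolynomial (Fin d) ℤ)) =
        PowerSeries.C ((-1) ^ q * esymm (Fin d) ℤ q) := by
      intro q
      rw [esymm, Finset.mul_sum, map_sum]
      refine Finset.sum_congr rfl fun s hs => ?_
      rw [← map_prod, Finset.prod_neg, (Finset.mem_powersetCard.1 hs).2]
    simp only [this, PowerSeries.coeff_C_mul, PowerSeries.coeff_X_pow]
    simp only [mul_ite, mul_one, mul_zero, Finset.sum_ite_eq, Finset.mem_range]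
    split_ifs with h
    · rfl
    · rw [esymm, Finset.powersetCard_eq_empty.2 (by simp; omega)]
      simp
  rw [h1, hsymm_gen, ← Finset.prod_mul_distrib]
  refine Finset.prod_eq_one fun i _ => ?_
  ext1 m
  rw [add_mul, one_mul, map_add, mul_assoc, PowerSeries.coeff_C_mul, PowerSeries.coeff_mk]
  cases m with
  | zero => simp
  | succ m =>
    rw [PowerSeries.coeff_succ_X_mul, PowerSeries.coeff_mk, PowerSeries.coeff_one]
    simp
    ring

lemma esymm_big (d r : ℕ) (h : d < r) : esymm (Fin d) ℤ r = 0 := by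
  rw [esymm, Finset.powersetCard_eq_empty.2 (by simpa using h)]
  simp

/-- shifted complete homogeneous polynomials: `gS d m = h_{m-(d-1)}`. -/
noncomputable def gS (d m : ℕ) : MvPolynomial (Fin d) ℤ :=
  if m + 1 < d then 0 else hsymm (Fin d) ℤ (m + 1 - d)

lemma gS_rec (d m : ℕ) (hd : 1 ≤ d) :
    gS d (m + d) = ∑ i : Fin d, (-1) ^ (d - 1 - (i : ℕ)) * esymm (Fin d) ℤ (d - i) * gS d (m + i) := by
  have h := congrArg (PowerSeries.coeff (m + 1)) (EH_one d)
  rw [PowerSeries.coeff_mul, PowerSeries.coeff_one, if_neg (by omega),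
    Finset.Nat.sum_antidiagonal_eq_sum_range_succ_mk] at h
  simp only [PowerSeries.coeff_mk] at h
  -- reindex as a sum over `range (d+1)`
  have h' : ∑ j ∈ Finset.range (d + 1), (-1) ^ j * esymm (Fin d) ℤ j * gS d (m + d - j) = 0 := by
    rw [← h]
    have e1 : ∀ N, d + 1 ≤ N → ∑ j ∈ Finset.range (d + 1), (-1) ^ j * esymm (Fin d) ℤ j * gS d (m + d - j)
        = ∑ j ∈ Finset.range N, (-1) ^ j * esymm (Fin d) ℤ j * gS d (m + d - j) := by
      intro N hN
      refine Finset.sum_subset (Finset.range_mono hN) fun j _ hj => ?_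
      rw [esymm_big d j (by simpa using hj)]
      simp
    rw [e1 (d + 1 + (m + 2)) (by omega)]
    symm
    refine Finset.sum_subset_zero_on_sdiff (Finset.range_mono (by omega)) ?_ ?_
    · intro j hj
      simp only [Finset.mem_sdiff, Finset.mem_range] at hj
      by_cases hjd : d < j
      · rw [esymm_big d j hjd]; simp
      · rw [gS, if_pos (by omega)]; simp
    · intro j hj
      have := Finset.mem_range.1 hj
      by_cases hjd : d < j
      · rw [esymm_big d j hjd]; simp
      · rw [gS, if_neg (by omega), show m + d - j + 1 - d = m + 1 - j by omega]
  rw [Finset.sum_range_succ', esymm_zero] at h'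
  simp only [pow_zero, one_mul, Nat.sub_zero] at h'
  rw [← Finset.sum_range_reflect, add_comm] at h'
  rw [eq_neg_of_add_eq_zero_left h', ← Finset.sum_neg_distrib, Finset.sum_range]
  refine Finset.sum_congr rfl fun i _ => ?_
  have hi := i.2
  rw [show d - 1 - (i : ℕ) + 1 = d - i by omega, show m + d - (d - (i : ℕ)) = m + i by omega]
  rw [show d - (i : ℕ) = (d - 1 - i) + 1 by omega, pow_succ]
  ring

lemma X_rec (d : ℕ) (hd : 1 ≤ d) (l : Fin d) :
    (X l : MvPolynomial (Fin d) ℤ) ^ d =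
      ∑ i : Fin d, (-1) ^ (d - 1 - (i : ℕ)) * esymm (Fin d) ℤ (d - i) * X l ^ (i : ℕ) := by
  have h : ∏ i : Fin d, (X i + (-X l : MvPolynomial (Fin d) ℤ)) = 0 :=
    Finset.prod_eq_zero (Finset.mem_univ l) (by ring)
  rw [Finset.prod_add, Finset.sum_powerset, Finset.card_univ, Fintype.card_fin] at h
  have h2 : ∀ j ∈ Finset.range (d + 1), (∑ t ∈ Finset.powersetCard j (Finset.univ : Finset (Fin d)),
      (∏ i ∈ t, X i) * ∏ i ∈ Finset.univ \ t, (-X l : MvPolynomial (Fin d) ℤ)) =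
      esymm (Fin d) ℤ j * (-X l) ^ (d - j) := by
    intro j hj
    rw [esymm, Finset.sum_mul]
    refine Finset.sum_congr rfl fun t ht => ?_
    rw [Finset.prod_const, Finset.card_sdiff_of_subset (Finset.subset_univ _),
      (Finset.mem_powersetCard.1 ht).2, Finset.card_univ, Fintype.card_fin]
  rw [Finset.sum_congr rfl h2, Finset.sum_range_succ', esymm_zero] at h
  rw [← Finset.sum_range_reflect, add_comm, one_mul, Nat.sub_zero] at h
  have h3 := congrArg (fun z => (-1) ^ d * z) (eq_neg_of_add_eq_zero_left h)
  rw [neg_pow (X l : MvPolynomial (Fin d) ℤ) d, ← mul_assoc, ← mul_pow] at h3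
  simp only [mul_neg, mul_one, neg_neg, one_pow, one_mul] at h3
  rw [h3, Finset.mul_sum, ← Finset.sum_neg_distrib, Finset.sum_range]
  refine Finset.sum_congr rfl fun i _ => ?_
  have hi := i.2
  rw [show d - 1 - (i : ℕ) + 1 = d - i by omega, show d - (d - (i : ℕ)) = i by omega, neg_pow]
  have : ((-1) ^ d * (-1) ^ (i : ℕ) : MvPolynomial (Fin d) ℤ) = - (-1) ^ (d - 1 - (i : ℕ)) := by
    have gen : ∀ D i : ℕ, i < D →
        ((-1) ^ D * (-1) ^ i : MvPolynomial (Fin d) ℤ) = - (-1) ^ (D - 1 - i) := by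
      intro D i hD
      obtain ⟨q, rfl⟩ : ∃ q, D = q + i + 1 := ⟨D - i - 1, by omega⟩
      rw [show q + i + 1 - 1 - i = q by omega, pow_succ, pow_add, mul_neg, mul_one, neg_mul,
        mul_assoc, ← mul_pow]
      simp
    exact gen d i hi
  linear_combination (-esymm (Fin d) ℤ (d - i) * X l ^ (i : ℕ)) * this

/-- companion matrix -/
noncomputable def compM (d : ℕ) : Matrix (Fin d) (Fin d) (MvPolynomial (Fin d) ℤ) :=
  Matrix.of fun i j => if (j : ℕ) + 1 < d then (if (i : ℕ) = j + 1 then 1 else 0)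
    else (-1) ^ (d - 1 - (i : ℕ)) * esymm (Fin d) ℤ (d - i)

lemma compM_row (d : ℕ) (f : ℕ → MvPolynomial (Fin d) ℤ)
    (hf : f d = ∑ i : Fin d, (-1) ^ (d - 1 - (i : ℕ)) * esymm (Fin d) ℤ (d - i) * f i) (j : Fin d) :
    ∑ i : Fin d, f i * compM d i j = f (j + 1) := by
  by_cases hj : (j : ℕ) + 1 < d
  · rw [Finset.sum_eq_single (⟨j + 1, hj⟩ : Fin d)]
    · simp [compM, hj]
    · intro i _ hi
      have : (i : ℕ) ≠ j + 1 := fun h => hi (Fin.ext h)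
      simp [compM, hj, this]
    · simp
  · have hj' : (j : ℕ) + 1 = d := by have := j.2; omega
    rw [hj', hf]
    refine Finset.sum_congr rfl fun i _ => ?_
    simp only [compM, Matrix.of_apply, if_neg hj]
    ring

/-- shifted Jacobi–Trudi determinant -/
noncomputable def Dt (d : ℕ) (α : Fin d → ℕ) : MvPolynomial (Fin d) ℤ :=
  (Matrix.of fun i j : Fin d => gS d (α i + j)).det

open Polynomial in
lemma det_one_add_compM (d : ℕ) (hd : 1 ≤ d) :
    (1 + (Polynomial.X : Polynomial (MvPolynomial (Fin d) ℤ)) • (compM d).map Polynomial.C).det =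
      ∏ i : Fin d, (1 + Polynomial.C (MvPolynomial.X i) * Polynomial.X) := by
  let W : Matrix (Fin d) (Fin d) (MvPolynomial (Fin d) ℤ) := Matrix.vandermonde MvPolynomial.X
  have hW : W.det ≠ 0 := Matrix.det_vandermonde_ne_zero_iff.2 (MvPolynomial.X_injective)
  have hWC : W * compM d = Matrix.diagonal MvPolynomial.X * W := by
    ext1 l j
    rw [Matrix.mul_apply, Matrix.diagonal_mul]
    have := compM_row d (fun m => (MvPolynomial.X l : MvPolynomial (Fin d) ℤ) ^ m) (X_rec d hd l) j
    simp only [W, Matrix.vandermonde_apply]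
    rw [this, pow_succ']
  have hdet : (W.map Polynomial.C).det ≠ 0 := by
    have : (W.map Polynomial.C).det = Polynomial.C W.det := (RingHom.map_det Polynomial.C W).symm
    rw [this]
    exact Polynomial.C_ne_zero.2 hW
  have key : W.map Polynomial.C *
      (1 + (Polynomial.X : Polynomial (MvPolynomial (Fin d) ℤ)) • (compM d).map Polynomial.C) =
      Matrix.diagonal (fun i => 1 + Polynomial.C (MvPolynomial.X i) * Polynomial.X) *
        W.map Polynomial.C := by
    have h2 : W.map Polynomial.C * (compM d).map Polynomial.C =
        (Matrix.diagonal MvPolynomial.X).map Polynomial.C * W.map Polynomial.C := by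
      rw [← Matrix.map_mul, ← Matrix.map_mul, hWC]
    rw [mul_add, mul_one, Matrix.mul_smul, h2]
    ext1 i j
    rw [Matrix.add_apply, Matrix.smul_apply, Matrix.diagonal_mul, Matrix.diagonal_map (map_zero _),
      Matrix.diagonal_mul]
    simp only [smul_eq_mul]
    ring
  have := congrArg Matrix.det key
  rw [Matrix.det_mul, Matrix.det_mul, Matrix.det_diagonal, mul_comm] at this
  exact mul_right_cancel₀ hdet this

lemma pieri (d : ℕ) (hd : 1 ≤ d) (α : Fin d → ℕ) (r : ℕ) :
    esymm (Fin d) ℤ r * Dt d α = ∑ s ∈ Finset.powersetCard r (Finset.univ : Finset (Fin d)),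
      Dt d (fun i => if i ∈ s then α i + 1 else α i) := by
  classical
  let V : Matrix (Fin d) (Fin d) (MvPolynomial (Fin d) ℤ) := Matrix.of fun i j => gS d (α i + j)
  let V' : Matrix (Fin d) (Fin d) (MvPolynomial (Fin d) ℤ) := Matrix.of fun i j => gS d (α i + 1 + j)
  have hV : V * compM d = V' := by
    ext1 i j
    rw [Matrix.mul_apply]
    have := compM_row d (fun m => gS d (α i + m)) (gS_rec d (α i) hd) j
    simp only [V, V', Matrix.of_apply]
    rw [this]
    congr 1
    ring
  have h1 : (V.map Polynomial.C + (Polynomial.X : Polynomial (MvPolynomial (Fin d) ℤ)) • V'.map Polynomial.C).det =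
      Polynomial.C (Dt d α) * ∏ i : Fin d, (1 + Polynomial.C (MvPolynomial.X i) * Polynomial.X) := by
    rw [← det_one_add_compM d hd, Dt, RingHom.map_det, ← Matrix.det_mul]
    congr 1
    change _ = V.map Polynomial.C * _
    rw [mul_add, mul_one, Matrix.mul_smul, ← Matrix.map_mul, hV]
  have h2 : (V.map Polynomial.C + (Polynomial.X : Polynomial (MvPolynomial (Fin d) ℤ)) • V'.map Polynomial.C).det =
      ∑ s : Finset (Fin d), Polynomial.X ^ s.card *
        Polynomial.C (Dt d (fun i => if i ∈ s then α i + 1 else α i)) := by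
    rw [add_comm]
    refine ((Matrix.detRowAlternating (R := Polynomial (MvPolynomial (Fin d) ℤ))
      (n := Fin d)).map_add_univ
      ((Polynomial.X : Polynomial (MvPolynomial (Fin d) ℤ)) • V'.map Polynomial.C)
      (V.map Polynomial.C)).trans ?_
    refine Finset.sum_congr rfl fun s _ => ?_
    rw [Dt, RingHom.map_det]
    have : s.piecewise ((Polynomial.X : Polynomial (MvPolynomial (Fin d) ℤ)) • V'.map Polynomial.C)
        (V.map Polynomial.C) = Matrix.of fun i j => (if i ∈ s then Polynomial.X else 1) *
        (Polynomial.C.mapMatrix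
          (Matrix.of fun i j : Fin d => gS d ((if i ∈ s then α i + 1 else α i) + j))) i j := by
      ext1 i
      funext j
      by_cases hi : i ∈ s
      · simp [hi, V', Finset.piecewise]
      · simp [hi, V, Finset.piecewise]
    rw [this]
    change Matrix.det _ = _
    rw [Matrix.det_mul_column]
    congr 1
    simp
  rw [h1, prod_one_add_mul] at h2
  have h3 := congrArg (fun p => Polynomial.coeff p r) h2
  simp only [Polynomial.coeff_C_mul, Polynomial.finsetSum_coeff] at h3
  have h4 : ∀ q, (∑ s ∈ Finset.powersetCard q Finset.univ,
        ∏ i ∈ s, Polynomial.C (X i : MvPolynomial (Fin d) ℤ)) =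
        Polynomial.C (esymm (Fin d) ℤ q) := by
    intro q
    rw [esymm, map_sum]
    refine Finset.sum_congr rfl fun s hs => ?_
    rw [← map_prod]
  simp only [h4, Polynomial.coeff_C_mul, Polynomial.coeff_X_pow, Polynomial.coeff_mul_C] at h3
  rw [mul_comm]
  have h5 : ∑ x ∈ Finset.range (d + 1), esymm (Fin d) ℤ x * (if r = x then 1 else 0) =
      esymm (Fin d) ℤ r := by
    simp only [mul_ite, mul_one, mul_zero, Finset.sum_ite_eq, Finset.mem_range]
    split_ifs with h
    · rfl
    · rw [esymm_big d r (by omega)]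
  rw [h5] at h3
  rw [h3]
  simp only [ite_mul, one_mul, zero_mul]
  rw [← Finset.sum_filter]
  refine Finset.sum_congr ?_ fun _ _ => rfl
  ext s
  simp [Finset.mem_powersetCard, eq_comm]

lemma schurPoly_eq (d : ℕ) (lam : Fin d → ℕ) :
    schurPoly d lam = Dt d (fun i => lam i + (d - 1 - i)) := by
  unfold schurPoly Dt
  congr 1
  ext1 i j
  simp only [Matrix.of_apply, hsymmZidx, gS]
  have hi := i.2
  have hj := j.2
  by_cases h : lam i + (d - 1 - i) + (j : ℕ) + 1 < d
  · rw [if_pos h, if_neg (by omega)]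
  · rw [if_neg h, if_pos (by omega)]
    congr 1
    omega

lemma Dt_eq_schur (d : ℕ) (α : Fin d → ℕ) (h : StrictAnti α) :
    ∃ lam : Fin d → ℕ, Antitone lam ∧ (∀ i, α i = lam i + (d - 1 - i)) ∧ Dt d α = schurPoly d lam := by
  have hm : ∀ m, ∀ i j : Fin d, (i : ℕ) + m = j → α j + m ≤ α i := by
    intro m
    induction m with
    | zero => intro i j hij; rw [show i = j from Fin.ext hij]; rfl
    | succ m ih =>
      intro i j hij
      have hj := j.2
      have h1 := ih i ⟨i + m, by omega⟩ rfl
      have h2 : α j < α ⟨i + m, by omega⟩ := h (by rw [Fin.lt_def]; simp; omega)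
      omega
  have hge : ∀ i : Fin d, d - 1 - i ≤ α i := by
    intro i
    have hi := i.2
    have := hm (d - 1 - i) i ⟨d - 1, by omega⟩ (by simp; omega)
    omega
  have he : ∀ i : Fin d, α i = (α i - (d - 1 - i)) + (d - 1 - i) := fun i => by
    have := hge i; omega
  refine ⟨fun i => α i - (d - 1 - i), fun i j hij => ?_, he, ?_⟩
  · have := hm (j - i) i j (by rw [Fin.le_def] at hij; omega)
    have hi := hge i
    have hj := hge j
    have := j.2
    rw [Fin.le_def] at hij
    dsimp only
    omega
  · rw [schurPoly_eq]
    congr 1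
    funext i
    exact he i

lemma Dt_zero (d : ℕ) (α : Fin d → ℕ) (i j : Fin d) (hij : i ≠ j) (h : α i = α j) : Dt d α = 0 := by
  unfold Dt
  refine Matrix.det_zero_of_row_eq hij ?_
  funext l
  simp [h]

lemma schur_zero (d : ℕ) : schurPoly d (fun _ => 0) = 1 := by
  unfold schurPoly
  rw [Matrix.det_of_isUpperTriangular]
  · refine Finset.prod_eq_one fun i _ => ?_
    simp [hsymmZidx]
  · intro i j hij
    have : (j : ℕ) < i := hij
    simp only [Matrix.of_apply, hsymmZidx]
    rw [if_neg]
    push_cast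
    omega

/-- Pieri, final form: product of `e_r` with a Schur polynomial is a sum of Schur polynomials. -/
lemma pieri_schur (d : ℕ) (hd : 1 ≤ d) (lam : Fin d → ℕ) (hl : Antitone lam) (r : ℕ) :
    ∃ (ι : Type) (s : Finset ι) (mu : ι → Fin d → ℕ), (∀ i ∈ s, Antitone (mu i)) ∧
      esymm (Fin d) ℤ r * schurPoly d lam = ∑ i ∈ s, schurPoly d (mu i) := by
  classical
  rw [schurPoly_eq, pieri d hd]
  set α : Fin d → ℕ := fun i => lam i + (d - 1 - i) with hα
  have hanti : ∀ i j, i < j → α j < α i := by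
    intro i j hij
    have := hl hij.le
    rw [Fin.lt_def] at hij
    have := j.2
    simp only [hα]
    omega
  let β : Finset (Fin d) → Fin d → ℕ := fun s i => if i ∈ s then α i + 1 else α i
  have hβ : ∀ s, ∀ i j, i < j → β s j ≤ β s i := by
    intro s i j hij
    have := hanti i j hij
    simp only [β]
    split_ifs <;> omega
  have hex : ∀ s, StrictAnti (β s) → ∃ lam : Fin d → ℕ, Antitone lam ∧ Dt d (β s) = schurPoly d lam :=
    fun s hs => by
      obtain ⟨l, h1, _, h2⟩ := Dt_eq_schur d (β s) hs
      exact ⟨l, h1, h2⟩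
  refine ⟨Finset (Fin d), (Finset.powersetCard r Finset.univ).filter (fun s => StrictAnti (β s)),
    fun s => if h : StrictAnti (β s) then (hex s h).choose else 0, ?_, ?_⟩
  · intro s hs
    have := (Finset.mem_filter.1 hs).2
    dsimp only
    rw [dif_pos this]
    exact (hex s this).choose_spec.1
  · rw [Finset.sum_filter]
    refine Finset.sum_congr rfl fun s _ => ?_
    split_ifs with h
    · dsimp only
      rw [dif_pos h]
      exact (hex s h).choose_spec.2
    · have : ∃ i j, i < j ∧ β s j = β s i := by
        by_contra hc
        push Not at hc
        exact h fun i j hij => lt_of_le_of_ne (hβ s i j hij) (hc i j hij)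
      obtain ⟨i, j, hij, he⟩ := this
      exact Dt_zero d (β s) j i hij.ne' he

/-- symmetric polynomials `e_r` as elements of the symmetric subalgebra. -/
noncomputable def eS (d r : ℕ) : symmetricSubalgebra (Fin d) ℤ := ⟨esymm (Fin d) ℤ r, esymm_isSymmetric _ _ r⟩

/-- symmetric polynomials `h_r` as elements of the symmetric subalgebra. -/
noncomputable def hS (d r : ℕ) : symmetricSubalgebra (Fin d) ℤ := ⟨hsymm (Fin d) ℤ r, hsymm_isSymmetric _ _ r⟩

/-- Schur polynomial in the symmetric subalgebra. -/
noncomputable def schurS (d : ℕ) (lam : Fin d → ℕ) : symmetricSubalgebra (Fin d) ℤ :=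
  (Matrix.of fun i j : Fin d => if 0 ≤ (lam i : ℤ) - ((i : ℕ) : ℤ) + ((j : ℕ) : ℤ) then
    hS d ((lam i : ℤ) - ((i : ℕ) : ℤ) + ((j : ℕ) : ℤ)).toNat else 0).det

lemma schurS_coe (d : ℕ) (lam : Fin d → ℕ) : (schurS d lam : MvPolynomial (Fin d) ℤ) = schurPoly d lam := by
  unfold schurS schurPoly
  change (symmetricSubalgebra (Fin d) ℤ).val.toRingHom _ = _
  rw [RingHom.map_det]
  congr 1
  ext1 i j
  simp only [RingHom.mapMatrix_apply, Matrix.map_apply, Matrix.of_apply, hsymmZidx]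
  split_ifs
  · rfl
  · exact map_zero _

lemma schurS_vanish {Q : Type*} [CommRing Q] (d k : ℕ) (φ : symmetricSubalgebra (Fin d) ℤ →+* Q)
    (h1 : ∀ r, k - d < r → φ (hS d r) = 0) (hd : 1 ≤ d) (lam : Fin d → ℕ)
    (hlam : k - d < lam ⟨0, hd⟩) : φ (schurS d lam) = 0 := by
  unfold schurS
  rw [RingHom.map_det]
  refine Matrix.det_eq_zero_of_row_eq_zero ⟨0, hd⟩ fun j => ?_
  simp only [RingHom.mapMatrix_apply, Matrix.map_apply, Matrix.of_apply]
  rw [if_pos (by simp; omega)]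
  apply h1
  simp
  omega

lemma EH_sub (d r : ℕ) (hr : 1 ≤ r) :
    ∑ p ∈ Finset.HasAntidiagonal.antidiagonal r, (-1) ^ p.1 * eS d p.1 * hS d p.2 = 0 := by
  have h := congrArg (PowerSeries.coeff r) (EH_one d)
  rw [PowerSeries.coeff_mul, PowerSeries.coeff_one, if_neg (by omega)] at h
  simp only [PowerSeries.coeff_mk] at h
  apply Subtype.ext
  change (symmetricSubalgebra (Fin d) ℤ).val _ = (symmetricSubalgebra (Fin d) ℤ).val 0
  rw [map_sum, map_zero, ← h]
  refine Finset.sum_congr rfl fun p _ => ?_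
  rw [map_mul, map_mul, map_pow, map_neg, map_one]
  rfl

lemma eS_zero (d : ℕ) : eS d 0 = 1 := by
  apply Subtype.ext
  change esymm (Fin d) ℤ 0 = 1
  exact esymm_zero _ _
lemma hS_zero (d : ℕ) : hS d 0 = 1 := Subtype.ext (hsymm_zero _ _)
lemma eS_big (d r : ℕ) (h : d < r) : eS d r = 0 := Subtype.ext (esymm_big d r h)

lemma eS_nilpotent {Q : Type*} [CommRing Q] (d m : ℕ) (φ : symmetricSubalgebra (Fin d) ℤ →+* Q)
    (h1 : ∀ r, m < r → φ (hS d r) = 0) (r : ℕ) (hr : r ≠ 0) : IsNilpotent (φ (eS d r)) := by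
  let E : Polynomial Q := ∑ r ∈ Finset.range (d + 1), Polynomial.C ((-1) ^ r * φ (eS d r)) * Polynomial.X ^ r
  let H : Polynomial Q := ∑ r ∈ Finset.range (m + 1), Polynomial.C (φ (hS d r)) * Polynomial.X ^ r
  have hE : ∀ r, E.coeff r = (-1) ^ r * φ (eS d r) := by
    intro r
    simp only [E, Polynomial.finsetSum_coeff, Polynomial.coeff_C_mul, Polynomial.coeff_X_pow,
      mul_ite, mul_one, mul_zero, Finset.sum_ite_eq, Finset.mem_range]
    split_ifs with h
    · rfl
    · rw [eS_big d r (by omega)]; simp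
  have hH : ∀ r, H.coeff r = φ (hS d r) := by
    intro r
    simp only [H, Polynomial.finsetSum_coeff, Polynomial.coeff_C_mul, Polynomial.coeff_X_pow,
      mul_ite, mul_one, mul_zero, Finset.sum_ite_eq, Finset.mem_range]
    split_ifs with h
    · rfl
    · rw [h1 r (by omega)]
  have hEH : E * H = 1 := by
    ext s
    rw [Polynomial.coeff_mul, Polynomial.coeff_one]
    simp only [hE, hH]
    split_ifs with h
    · subst h
      simp [eS_zero, hS_zero]
    · have := congrArg φ (EH_sub d s (by omega))
      simpa using this
  have hu : IsUnit E := IsUnit.of_mul_eq_one H hEH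
  have := (Polynomial.isUnit_iff_coeff_isUnit_isNilpotent.1 hu).2 r hr
  rw [hE] at this
  have h2 : IsNilpotent ((-1 : Q) ^ r * ((-1) ^ r * φ (eS d r))) :=
    Ideal.mul_mem_left (nilradical Q) _ this
  rw [← mul_assoc, ← mul_pow] at h2
  simpa using h2

lemma esymm_eval_eq_eR {Q : Type*} [CommRing Q] (n : ℕ) (xq : Fin n → Q) (r : ℕ) :
    (∑ s ∈ Finset.powersetCard (r) (Finset.univ : Finset (Fin n)), ∏ i ∈ s, xq i) = eR (fun i => if h : i < n then xq ⟨i, h⟩ else 0) n r := by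
  rw [eR]
  have : Finset.range n = (Finset.univ : Finset (Fin n)).map Fin.valEmbedding := by
    ext i; simp
  rw [this, Finset.powersetCard_map, Finset.sum_map]
  refine Finset.sum_congr rfl fun s _ => ?_
  simp

theorem abstract_span {Q : Type*} [CommRing Q] (n k d : ℕ) (hd : 1 ≤ d) (hk : d ≤ k) (hn : k ≤ n)
    (xq : Fin n → Q) (φ : symmetricSubalgebra (Fin d) ℤ →+* Q)
    (hgen : Subring.closure (Set.range xq ∪ Set.range (fun r => φ (eS d r))) = ⊤)
    (h1 : ∀ r, k - d < r → φ (hS d r) = 0)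
    (h2 : ∀ r, n - d < r → ∑ j ∈ Finset.range (r + 1),
      (-1) ^ j * ((∑ s ∈ Finset.powersetCard (r - j) (Finset.univ : Finset (Fin n)), ∏ i ∈ s, xq i) * φ (hS d j)) = 0)
    (h3 : ∀ i, ∑ j ∈ Finset.range (d + 1), (-1) ^ j * (xq i ^ (d - j) * φ (eS d j)) = 0) :
    Submodule.span ℤ {q : Q | ∃ a : Fin n → ℕ, IsSubstaircase n d a ∧
      ∃ lam : Fin d → ℕ, Antitone lam ∧ (∀ i, lam i ≤ k - d) ∧
        q = (∏ j, xq j ^ a j) * φ (schurS d lam)} = ⊤ := by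
  set N := Submodule.span ℤ {q : Q | ∃ a : Fin n → ℕ, IsSubstaircase n d a ∧
      ∃ lam : Fin d → ℕ, Antitone lam ∧ (∀ i, lam i ≤ k - d) ∧
        q = (∏ j, xq j ^ a j) * φ (schurS d lam)} with hN
  -- stability under multiplication by `e_r`
  have stab : ∀ r, ∀ q ∈ N, φ (eS d r) * q ∈ N := by
    intro r q hq
    induction hq using Submodule.span_induction with
    | mem q hq =>
      obtain ⟨a, ha, lam, hl, hb, rfl⟩ := hq
      obtain ⟨ι, s, mu, hmu, he⟩ := pieri_schur d hd lam hl r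
      have he' : eS d r * schurS d lam = ∑ i ∈ s, schurS d (mu i) := by
        apply Subtype.ext
        change (symmetricSubalgebra (Fin d) ℤ).val (eS d r * schurS d lam) =
          (symmetricSubalgebra (Fin d) ℤ).val (∑ i ∈ s, schurS d (mu i))
        rw [map_mul, map_sum]
        simp only [Subalgebra.coe_val, schurS_coe]
        exact he
      have : φ (eS d r) * ((∏ j, xq j ^ a j) * φ (schurS d lam)) =
          ∑ i ∈ s, (∏ j, xq j ^ a j) * φ (schurS d (mu i)) := by
        rw [← Finset.mul_sum, ← map_sum, ← he', map_mul]
        ring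
      rw [this]
      refine Submodule.sum_mem _ fun i hi => ?_
      by_cases hbox : k - d < mu i ⟨0, hd⟩
      · rw [schurS_vanish d k φ h1 hd _ hbox]
        simp
      · refine Submodule.subset_span ⟨a, ha, mu i, hmu i hi, fun j => ?_, rfl⟩
        have : mu i j ≤ mu i ⟨0, hd⟩ := hmu i hi (by rw [Fin.le_def]; simp)
        omega
    | zero => simp
    | add a b _ _ ha hb => rw [mul_add]; exact N.add_mem ha hb
    | smul c a _ ha => rw [mul_smul_comm]; exact N.smul_mem c ha
  set G : Set Q := (fun r => φ (eS d r)) '' (Set.Icc 1 d) with hG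
  set J : Ideal Q := Ideal.span G with hJ
  have eJ : ∀ r, r ≠ 0 → φ (eS d r) ∈ J := by
    intro r hr
    by_cases hrd : r ≤ d
    · exact Ideal.subset_span ⟨r, ⟨by omega, hrd⟩, rfl⟩
    · rw [eS_big d r (by omega), map_zero]
      exact J.zero_mem
  have hJm : ∀ r, r ≠ 0 → φ (hS d r) ∈ J := by
    intro r hr
    have := congrArg φ (EH_sub d r (by omega))
    rw [map_sum, map_zero, Finset.Nat.sum_antidiagonal_eq_sum_range_succ_mk,
      Finset.sum_range_succ'] at this
    simp only [eS_zero, pow_zero, one_mul, Nat.sub_zero] at this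
    rw [add_comm] at this
    rw [eq_neg_of_add_eq_zero_left this]
    refine J.neg_mem (J.sum_mem fun i _ => ?_)
    rw [map_mul, map_mul]
    exact J.mul_mem_right _ (J.mul_mem_left _ (eJ _ (by omega)))
  have xJ : ∀ i, xq i ^ d ∈ J := by
    intro i
    have := h3 i
    rw [Finset.sum_range_succ', add_comm] at this
    simp only [eS_zero, pow_zero, one_mul, Nat.sub_zero, map_one, mul_one] at this
    rw [eq_neg_of_add_eq_zero_left this]
    refine J.neg_mem (J.sum_mem fun j _ => ?_)
    exact J.mul_mem_left _ (J.mul_mem_left _ (eJ _ (by omega)))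
  have exJ : ∀ r, n - d < r → (∑ s ∈ Finset.powersetCard (r) (Finset.univ : Finset (Fin n)), ∏ i ∈ s, xq i) ∈ J := by
    intro r hr
    have := h2 r hr
    rw [Finset.sum_range_succ', add_comm] at this
    simp only [hS_zero, pow_zero, one_mul, Nat.sub_zero, map_one, mul_one] at this
    rw [eq_neg_of_add_eq_zero_left this]
    refine J.neg_mem (J.sum_mem fun j _ => ?_)
    exact J.mul_mem_left _ (J.mul_mem_left _ (hJm _ (by omega)))
  let x : ℕ → Q := fun i => if h : i < n then xq ⟨i, h⟩ else 0
  have hx : ∀ i : Fin n, x i = xq i := fun i => by simp [x]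
  let T : AddSubgroup Q := N.toAddSubgroup ⊔ J.toAddSubgroup
  have NT : ∀ q ∈ N, q ∈ T := fun q hq => AddSubgroup.mem_sup_left hq
  have JT : ∀ q ∈ J, q ∈ T := fun q hq => AddSubgroup.mem_sup_right hq
  have AT : ∀ f ∈ Algebra.adjoin ℤ (x '' Set.Iio n), f ∈ T := by
    refine good_span x d n d T ?_ ?_ ?_
    · intro a ha
      apply NT
      refine Submodule.subset_span ⟨fun i => a i, ha.isSubstaircase, fun _ => 0,
        fun _ _ _ => le_rfl, fun _ => by simp, ?_⟩
      have : schurS d (fun _ => 0) = 1 := by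
        apply Subtype.ext
        rw [schurS_coe, schur_zero]
        rfl
      rw [this, map_one, mul_one, Finset.prod_range]
      exact Finset.prod_congr rfl fun i _ => by rw [hx]
    · intro f _ i hi
      apply JT
      apply J.mul_mem_left
      have := xJ ⟨i, hi⟩
      rwa [← hx] at this
    · intro f _ r hr
      apply JT
      apply J.mul_mem_left
      have := exJ r (by omega)
      rwa [esymm_eval_eq_eR] at this
  have all0 : ∀ q : Q, q ∈ T := by
    intro q
    have hq : q ∈ Subring.closure (Set.range xq ∪ Set.range (fun r => φ (eS d r))) := by
      rw [hgen]; trivial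
    have : ∃ a ∈ Algebra.adjoin ℤ (x '' Set.Iio n), q - a ∈ J := by
      induction hq using Subring.closure_induction with
      | mem y hy =>
        rcases hy with ⟨i, rfl⟩ | ⟨r, rfl⟩
        · exact ⟨xq i, Algebra.subset_adjoin ⟨i, i.2, hx i⟩, by simp⟩
        · by_cases hr : r = 0
          · subst hr
            exact ⟨1, one_mem _, by simp [eS_zero]⟩
          · exact ⟨0, zero_mem _, by simpa using eJ r hr⟩
      | zero => exact ⟨0, zero_mem _, by simp⟩
      | one => exact ⟨1, one_mem _, by simp⟩
      | neg u _ hu =>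
        obtain ⟨a, ha, ha'⟩ := hu
        refine ⟨-a, neg_mem ha, ?_⟩
        convert J.neg_mem ha' using 1
        ring
      | add u v _ _ hu hv =>
        obtain ⟨a, ha, ha'⟩ := hu
        obtain ⟨b, hb, hb'⟩ := hv
        refine ⟨a + b, add_mem ha hb, ?_⟩
        convert J.add_mem ha' hb' using 1
        ring
      | mul u v _ _ hu hv =>
        obtain ⟨a, ha, ha'⟩ := hu
        obtain ⟨b, hb, hb'⟩ := hv
        refine ⟨a * b, mul_mem ha hb, ?_⟩
        convert J.add_mem (J.mul_mem_left u hb') (J.mul_mem_right b ha') using 1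
        ring
    obtain ⟨a, ha, ha'⟩ := this
    have := T.add_mem (AT a ha) (JT _ ha')
    simpa using this
  have step : ∀ s, ∀ w ∈ J ^ s, ∃ v ∈ N, w - v ∈ J ^ (s + 1) := by
    intro s
    induction s with
    | zero =>
      intro w _
      obtain ⟨v, hv, u, hu, rfl⟩ := AddSubgroup.mem_sup.1 (all0 w)
      refine ⟨v, hv, ?_⟩
      simpa using hu
    | succ s ih =>
      intro w hw
      rw [pow_succ'] at hw
      induction hw using Submodule.mul_induction_on' with
      | mem_mul_mem a ha b hb =>
        induction ha using Submodule.span_induction generalizing b with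
        | mem a ha =>
          obtain ⟨r, hr, rfl⟩ := ha
          obtain ⟨v, hv, hv'⟩ := ih b hb
          refine ⟨φ (eS d r) * v, stab r v hv, ?_⟩
          dsimp only
          rw [← mul_sub, pow_succ' J (s + 1)]
          exact Ideal.mul_mem_mul (eJ r (by have := hr.1; omega)) hv'
        | zero => exact ⟨0, N.zero_mem, by simp⟩
        | add a a' _ _ ha ha' =>
          obtain ⟨v, hv, hv'⟩ := ha b hb
          obtain ⟨u, hu, hu'⟩ := ha' b hb
          refine ⟨v + u, N.add_mem hv hu, ?_⟩
          convert Ideal.add_mem _ hv' hu' using 1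
          ring
        | smul c a _ ha =>
          obtain ⟨v, hv, hv'⟩ := ha (c * b) (Ideal.mul_mem_left _ c hb)
          refine ⟨v, hv, ?_⟩
          convert hv' using 1
          rw [smul_eq_mul]
          ring
      | add a _ a' _ ha ha' =>
        obtain ⟨v, hv, hv'⟩ := ha
        obtain ⟨u, hu, hu'⟩ := ha'
        refine ⟨v + u, N.add_mem hv hu, ?_⟩
        convert Ideal.add_mem _ hv' hu' using 1
        ring
  have all : ∀ s, ∀ q : Q, ∃ v ∈ N, q - v ∈ J ^ s := by
    intro s
    induction s with
    | zero => intro q; exact ⟨0, N.zero_mem, by simp⟩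
    | succ s ih =>
      intro q
      obtain ⟨v, hv, hv'⟩ := ih q
      obtain ⟨u, hu, hu'⟩ := step s _ hv'
      refine ⟨v + u, N.add_mem hv hu, ?_⟩
      rwa [← sub_sub]
  have nil : IsNilpotent J := by
    have hfg : J.FG := Submodule.fg_span ((Set.finite_Icc 1 d).image _)
    rw [Ideal.FG.isNilpotent_iff_le_nilradical hfg, hJ, Ideal.span_le]
    rintro _ ⟨r, hr, rfl⟩
    exact eS_nilpotent d (k - d) φ h1 r (by have := hr.1; omega)
  obtain ⟨s, hs⟩ := nil
  rw [eq_top_iff]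
  intro q _
  obtain ⟨v, hv, hv'⟩ := all s q
  rw [hs] at hv'
  have : q = v := sub_eq_zero.1 (by simpa using hv')
  rwa [this]

lemma mem_invZ2 {n d : ℕ} {f : MvPolynomial (Fin n ⊕ Fin d) ℤ} :
    f ∈ invZ2 n d ↔ ∀ g : Equiv.Perm (Fin d), rename (⇑(permY n d g)) f = f := Iff.rfl

lemma X_mem_inv (n d : ℕ) (i : Fin n) : (X (Sum.inl i) : MvPolynomial (Fin n ⊕ Fin d) ℤ) ∈ invZ2 n d := by
  intro g
  rw [rename_X]
  rfl

lemma rename_inr_mem (n d : ℕ) (p : MvPolynomial (Fin d) ℤ) (hp : p ∈ symmetricSubalgebra (Fin d) ℤ) :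
    rename (Sum.inr : Fin d → Fin n ⊕ Fin d) p ∈ invZ2 n d := by
  intro g
  rw [mem_symmetricSubalgebra] at hp
  rw [rename_rename]
  have : (⇑(permY n d g) ∘ Sum.inr : Fin d → Fin n ⊕ Fin d) = Sum.inr ∘ g := by
    funext i; rfl
  rw [this, ← rename_rename, hp g]

/-- the map from symmetric polynomials in `y` into the invariant ring. -/
noncomputable def symToInv (n d : ℕ) : symmetricSubalgebra (Fin d) ℤ →+* invZ2 n d :=
  RingHom.codRestrict ((rename (Sum.inr : Fin d → Fin n ⊕ Fin d)).toRingHom.comp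
    (symmetricSubalgebra (Fin d) ℤ).val.toRingHom) (invZ2 n d) (fun p => rename_inr_mem n d p.1 p.2)

lemma symToInv_coe (n d : ℕ) (p : symmetricSubalgebra (Fin d) ℤ) :
    (symToInv n d p : MvPolynomial (Fin n ⊕ Fin d) ℤ) = rename Sum.inr p.1 := rfl

lemma inv_gen (n d : ℕ) :
    Algebra.adjoin ℤ (Set.range (fun i : Fin n => (⟨X (Sum.inl i), X_mem_inv n d i⟩ : invZ2 n d)) ∪
      Set.range (fun r => symToInv n d (eS d r))) = ⊤ := by
  set S := Algebra.adjoin ℤ (Set.range (fun i : Fin n => (⟨X (Sum.inl i), X_mem_inv n d i⟩ : invZ2 n d)) ∪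
      Set.range (fun r => symToInv n d (eS d r))) with hS
  let F : MvPolynomial (Fin n ⊕ Fin d) ℤ →ₐ[ℤ] MvPolynomial (Fin d) (MvPolynomial (Fin n) ℤ) :=
    aeval (Sum.elim (fun i => C (X i)) X)
  let G : MvPolynomial (Fin d) (MvPolynomial (Fin n) ℤ) →+* MvPolynomial (Fin n ⊕ Fin d) ℤ :=
    eval₂Hom (rename Sum.inl : MvPolynomial (Fin n) ℤ →ₐ[ℤ] MvPolynomial (Fin n ⊕ Fin d) ℤ).toRingHom
      (fun j => X (Sum.inr j))
  have hGF : ∀ f, G (F f) = f := by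
    intro f
    have : (G.comp F.toRingHom) = RingHom.id _ := by
      apply MvPolynomial.ringHom_ext
      · intro r; simp
      · rintro (i | j)
        · simp [F, G]
        · simp [F, G]
    exact congrArg (fun h => h f) this
  have hsym : ∀ f ∈ invZ2 n d, (F f).IsSymmetric := by
    intro f hf g
    have : ((rename g : MvPolynomial (Fin d) (MvPolynomial (Fin n) ℤ) →ₐ[MvPolynomial (Fin n) ℤ] _).toRingHom.comp
        F.toRingHom) = F.toRingHom.comp (rename (⇑(permY n d g))).toRingHom := by
      apply MvPolynomial.ringHom_ext
      · intro r; simp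
      · rintro (i | j)
        · simp [F, permY]
        · simp [F, permY]
    have h2 := congrArg (fun h => h f) this
    have h3 := hf g
    change rename g (F f) = F (rename (⇑(permY n d g)) f) at h2
    rw [h2, h3]
  rw [eq_top_iff]
  rintro ⟨f, hf⟩ -
  obtain ⟨p, hp⟩ := esymmAlgHom_surjective (n := d) (σ := Fin d) (MvPolynomial (Fin n) ℤ) (by simp)
    ⟨F f, hsym f hf⟩
  have hp' : aeval (fun i : Fin d => esymm (Fin d) (MvPolynomial (Fin n) ℤ) (i + 1)) p = F f := by
    rw [← esymmAlgHom_apply, hp]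
  have key : ∀ p : MvPolynomial (Fin d) (MvPolynomial (Fin n) ℤ), ∃ a ∈ S,
      (a : MvPolynomial (Fin n ⊕ Fin d) ℤ) =
        G (aeval (fun i : Fin d => esymm (Fin d) (MvPolynomial (Fin n) ℤ) (i + 1)) p) := by
    intro p
    induction p using MvPolynomial.induction_on with
    | C q =>
      rw [aeval_C]
      change ∃ a ∈ S, (a : MvPolynomial (Fin n ⊕ Fin d) ℤ) = G (C q)
      have hGC : ∀ q, G (C q) = rename Sum.inl q := fun q => by simp [G]
      rw [hGC]
      induction q using MvPolynomial.induction_on with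
      | C m => exact ⟨algebraMap ℤ _ m, Subalgebra.algebraMap_mem _ m, by rw [rename_C]; rfl⟩
      | add u v hu hv =>
        obtain ⟨a, ha, ha'⟩ := hu
        obtain ⟨b, hb, hb'⟩ := hv
        exact ⟨a + b, add_mem ha hb, by rw [map_add, ← ha', ← hb']; rfl⟩
      | mul_X u i hu =>
        obtain ⟨a, ha, ha'⟩ := hu
        refine ⟨a * ⟨X (Sum.inl i), X_mem_inv n d i⟩,
          mul_mem ha (Algebra.subset_adjoin (Or.inl ⟨i, rfl⟩)), ?_⟩
        rw [map_mul, ← ha', rename_X]; rfl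
    | add u v hu hv =>
      obtain ⟨a, ha, ha'⟩ := hu
      obtain ⟨b, hb, hb'⟩ := hv
      exact ⟨a + b, add_mem ha hb, by rw [map_add, map_add, ← ha', ← hb']; rfl⟩
    | mul_X u i hu =>
      obtain ⟨a, ha, ha'⟩ := hu
      refine ⟨a * symToInv n d (eS d (i + 1)),
        mul_mem ha (Algebra.subset_adjoin (Or.inr ⟨i + 1, rfl⟩)), ?_⟩
      rw [map_mul, map_mul, ← ha', aeval_X]
      have : G (esymm (Fin d) (MvPolynomial (Fin n) ℤ) (i + 1)) =
          rename Sum.inr (esymm (Fin d) ℤ (i + 1)) := by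
        rw [esymm, esymm, map_sum, map_sum]
        refine Finset.sum_congr rfl fun s _ => ?_
        rw [map_prod, map_prod]
        refine Finset.prod_congr rfl fun j _ => ?_
        simp [G]
      rw [this]
      rfl
  obtain ⟨a, ha, ha'⟩ := key p
  rw [hp', hGF] at ha'
  have : a = ⟨f, hf⟩ := Subtype.ext ha'
  rwa [← this]


/-- The quotient `ℤ[x,y]^{S_d}/(ℤ[x,y]^{S_d}·G)` is spanned over `ℤ`
by the images of the elements of `C_{n,k,d}`. -/
theorem CsetZ_spans (n k d : ℕ) (hd : 1 ≤ d) (hk : d ≤ k) (hn : k ≤ n) :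
    Submodule.span ℤ
      (⇑(Ideal.Quotient.mk (Ideal.span (Subtype.val ⁻¹' GgensZ n k d : Set ↥(invZ2 n d)))) ''
        (Subtype.val ⁻¹' CsetZ n k d)) = ⊤ := by
  set I : Ideal (invZ2 n d) := Ideal.span (Subtype.val ⁻¹' GgensZ n k d : Set ↥(invZ2 n d)) with hI
  let xA : Fin n → invZ2 n d := fun i => ⟨X (Sum.inl i), X_mem_inv n d i⟩
  let φ : symmetricSubalgebra (Fin d) ℤ →+* (invZ2 n d ⧸ I) := (Ideal.Quotient.mk I).comp (symToInv n d)
  let xq : Fin n → (invZ2 n d ⧸ I) := fun i => Ideal.Quotient.mk I (xA i)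
  have vanish : ∀ a : invZ2 n d, (a : MvPolynomial (Fin n ⊕ Fin d) ℤ) ∈ GgensZ n k d →
      Ideal.Quotient.mk I a = 0 := fun a ha =>
    Ideal.Quotient.eq_zero_iff_mem.2 (Ideal.subset_span ha)
  let eA : ℕ → invZ2 n d := fun r => (∑ s ∈ Finset.powersetCard (r) (Finset.univ : Finset (Fin n)), ∏ i ∈ s, xA i)
  have hev : ∀ r, (eA r : MvPolynomial (Fin n ⊕ Fin d) ℤ) = eXZ n d r := by
    intro r
    change (invZ2 n d).val (eA r) = _
    rw [map_sum, eXZ, esymm, map_sum]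
    refine Finset.sum_congr rfl fun s _ => ?_
    rw [map_prod, map_prod]
    refine Finset.prod_congr rfl fun j _ => ?_
    rw [rename_X]
    rfl
  have hevq : ∀ r, (∑ s ∈ Finset.powersetCard (r) (Finset.univ : Finset (Fin n)), ∏ i ∈ s, xq i) = Ideal.Quotient.mk I (eA r) := by
    intro r
    rw [map_sum]
    refine Finset.sum_congr rfl fun s _ => ?_
    rw [map_prod]
  have main := abstract_span n k d hd hk hn xq φ ?_ ?_ ?_ ?_
  · rw [eq_top_iff, ← main]
    refine Submodule.span_mono ?_
    rintro _ ⟨a, ha, lam, hl, hb, rfl⟩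
    refine ⟨(∏ j, xA j ^ a j) * symToInv n d (schurS d lam), ⟨a, ha, lam, hl, hb, ?_⟩, ?_⟩
    · change (invZ2 n d).val ((∏ j, xA j ^ a j) * symToInv n d (schurS d lam)) = _
      rw [map_mul, map_prod]
      simp only [map_pow]
      rw [← schurS_coe]
      rfl
    · rw [map_mul, map_prod]
      simp only [map_pow]
      rfl
  · rw [eq_top_iff]
    intro q _
    obtain ⟨a, rfl⟩ := Ideal.Quotient.mk_surjective q
    have ha : a ∈ Algebra.adjoin ℤ (Set.range (fun i : Fin n => (⟨X (Sum.inl i), X_mem_inv n d i⟩ : invZ2 n d)) ∪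
      Set.range (fun r => symToInv n d (eS d r))) := by rw [inv_gen]; trivial
    induction ha using Algebra.adjoin_induction with
    | mem y hy =>
      rcases hy with ⟨i, rfl⟩ | ⟨r, rfl⟩
      · exact Subring.subset_closure (Or.inl ⟨i, rfl⟩)
      · exact Subring.subset_closure (Or.inr ⟨r, rfl⟩)
    | algebraMap m =>
      rw [eq_intCast, map_intCast]
      exact intCast_mem _ m
    | add u v _ _ hu hv => rw [map_add]; exact add_mem (hu trivial) (hv trivial)
    | mul u v _ _ hu hv => rw [map_mul]; exact mul_mem (hu trivial) (hv trivial)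
  · intro r hr
    exact vanish _ (Or.inl (Or.inl ⟨r, hr, rfl⟩))
  · intro r hr
    have h0 := vanish (∑ j ∈ Finset.range (r + 1), (-1) ^ j *
      (eA (r - j) * symToInv n d (hS d j))) (Or.inl (Or.inr ⟨r, hr, ?_⟩))
    · rw [map_sum] at h0
      rw [← h0]
      refine Finset.sum_congr rfl fun j _ => ?_
      rw [hevq, map_mul, map_mul, map_pow, map_neg, map_one]
      rfl
    · change (invZ2 n d).val (∑ j ∈ Finset.range (r + 1), (-1) ^ j *
        (eA (r - j) * symToInv n d (hS d j))) = _
      rw [map_sum, genXYZ]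
      refine Finset.sum_congr rfl fun j _ => ?_
      rw [map_mul, map_mul, map_pow, map_neg, map_one, ← hev]
      rfl
  · intro i
    have h0 := vanish (∑ j ∈ Finset.range (d + 1), (-1) ^ j *
      (xA i ^ (d - j) * symToInv n d (eS d j))) (Or.inr ⟨i, ?_⟩)
    · rw [map_sum] at h0
      rw [← h0]
      refine Finset.sum_congr rfl fun j _ => ?_
      rw [map_mul, map_mul, map_pow, map_pow, map_neg, map_one]
      rfl
    · change (invZ2 n d).val (∑ j ∈ Finset.range (d + 1), (-1) ^ j *
        (xA i ^ (d - j) * symToInv n d (eS d j))) = _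
      rw [map_sum, genPowZ]
      refine Finset.sum_congr rfl fun j _ => ?_
      rw [map_mul, map_mul, map_pow, map_pow, map_neg, map_one]
      rfl
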